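/- Let R = ℝ[x,y,z], s swap x,y, r swap y,z, B_s = R⊗_{R^s}R(1), B_r = R⊗_{R^r}R(1), B_{srs} = R⊗_{R^{s,r}}R(3). Then there is an isomorphism of graded R-bimodules B_s ⊗_R B_r ⊗_R B_s ≅ B_{srs} ⊕ B_s. -/

import Mathlib

/-!
The inverse isomorphism `g : B_{srs} ⊕ Bₛ → Bₛ B_r Bₛ` is explicit. It sends `1 ⊗ 1 ∈ B_{srs}` to
`1 ⊗ 1 ⊗ 1 ⊗ 1` and `1 ⊗ 1 ∈ Bₛ` to `G = 1 ⊗ (α_r ⊗ 1 + 1 ⊗ α_r) ⊗ 1`, the image of `1 ⊗ 1` under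
`m_r^a ∘ j_s^a`. The second assignment is well defined because `G` intertwines the two middle
factors (`Chain.i₁_mul_G`), hence the left and right actions of `Rˢ`.

Surjectivity, with control of degrees: number the tensor factors `0, 1, 2, 3` and write `yᵢ`
for the variable `y` of factor `i`. The sum `y₁ + y₂` differs from `-G`, and the difference
`y₁ - y₂` from `0`, by linear forms in the outer variables, so `y₁ = (γ - G) / 2` with `γ` such a form. The quadratic equation of `y₁` over `Rˢ` then
expresses `G²` through `1` and `G` (`Chain.G_mul_G`). Therefore the subbimodule generated by `1` and
`G` is stable under all variables of all four factors, each raising the degree by `2`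
(`Chain.mem_img`).

Injectivity: for `w₁, w₃ ∈ {1, s}` and `w₂ ∈ {1, r}` there is an evaluation
`p ⊗ q ⊗ h ⊗ t ↦ p * w₁ (q * w₂ (h * w₃ t))` on `Bₛ B_r Bₛ` (`exists_eval`). On the image of
`B_{srs}` these restrict to the six maps `p ⊗ t ↦ p * w t`, `w ∈ S₃`. As `R` is spanned by
`zⁱyʲ` (`i ≤ 2`, `j ≤ 1`) over `R^{s,r}` and by `1, y` over `Rˢ`, a Vandermonde argument shows that
the evaluations detect all coordinates (`Bsrs_coeffs_eq_zero`, `g_injective`).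
-/

open MvPolynomial TensorProduct

set_option synthInstance.maxHeartbeats 1000000
set_option maxHeartbeats 4000000

/-- `R = ℝ[x,y,z]` (`x = X 0`, `y = X 1`, `z = X 2`), with the paper's grading: the usual
grading multiplied by two. -/
noncomputable abbrev RR3 : Type := MvPolynomial (Fin 3) ℝ

/-- The action of the simple reflection `s = (12)`, exchanging `x` and `y`. -/
noncomputable def sAct : RR3 ≃ₐ[ℝ] RR3 :=
  MvPolynomial.renameEquiv ℝ (Equiv.swap (0 : Fin 3) 1)

/-- The action of the simple reflection `r = (23)`, exchanging `y` and `z`. -/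
noncomputable def rAct : RR3 ≃ₐ[ℝ] RR3 :=
  MvPolynomial.renameEquiv ℝ (Equiv.swap (1 : Fin 3) 2)

/-- The invariant subring `Rˢ`. -/
noncomputable def Rs : Subalgebra ℝ RR3 :=
  AlgHom.equalizer (sAct : RR3 →ₐ[ℝ] RR3) (AlgHom.id ℝ RR3)

/-- The invariant subring `Rʳ`. -/
noncomputable def Rr : Subalgebra ℝ RR3 :=
  AlgHom.equalizer (rAct : RR3 →ₐ[ℝ] RR3) (AlgHom.id ℝ RR3)

/-- The ring of `S₃`-invariants `R^{s,r}`. -/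
noncomputable def RW : Subalgebra ℝ RR3 := Rs ⊓ Rr

/-- The Soergel bimodule `Bₛ = R ⊗_{Rˢ} R (1)`. -/
noncomputable abbrev Bs : Type := RR3 ⊗[Rs] RR3

/-- The Soergel bimodule `B_{srs} = R ⊗_{R^{s,r}} R (3)`. -/
noncomputable abbrev Bsrs : Type := RR3 ⊗[RW] RR3

noncomputable instance : Algebra ℝ Bs := Algebra.TensorProduct.leftAlgebra
noncomputable instance : Algebra ℝ Bsrs := Algebra.TensorProduct.leftAlgebra

/-- `R ⊗_{Rˢ} R`, the rightmost part of `Bₛ B_r Bₛ`. -/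
noncomputable abbrev T1 : Type := RR3 ⊗[Rs] RR3

noncomputable instance iRrT1 : Algebra Rr T1 :=
  (Algebra.TensorProduct.includeLeftRingHom.comp (algebraMap Rr RR3)).toAlgebra

noncomputable instance (priority := 10000) iMRrT1 : Module Rr T1 := iRrT1.toModule

/-- `R ⊗_{Rʳ} (R ⊗_{Rˢ} R)`, the right part of `Bₛ B_r Bₛ`. -/
noncomputable abbrev T2 : Type := @TensorProduct Rr _ RR3 T1 _ _ _ iRrT1.toModule

noncomputable instance : CommRing T2 :=
  Algebra.TensorProduct.instCommRing (R := Rr) (A := RR3) (B := T1)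

noncomputable instance iRsT2 : Algebra Rs T2 :=
  ((Algebra.TensorProduct.includeLeftRingHom (R := Rr) (A := RR3) (B := T1)).comp
    (algebraMap Rs RR3)).toAlgebra

noncomputable instance (priority := 10000) iMRsT2 : Module Rs T2 := iRsT2.toModule

/-- `Bₛ B_r Bₛ ≅ R ⊗_{Rˢ} R ⊗_{Rʳ} R ⊗_{Rˢ} R (3)`. -/
noncomputable abbrev T3 : Type := @TensorProduct Rs _ RR3 T2 _ _ _ iRsT2.toModule

noncomputable instance : CommRing T3 :=
  Algebra.TensorProduct.instCommRing (R := Rs) (A := RR3) (B := T2)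

noncomputable instance : Algebra ℝ T3 :=
  Algebra.TensorProduct.leftAlgebra (R := Rs) (A := RR3) (B := T2) (S := ℝ)

/-- The degree-`n` component of `Bₛ B_r Bₛ` (variables in degree `2`, shift `(3)`). -/
noncomputable def T3Deg (n : ℤ) : Submodule ℝ T3 :=
  Submodule.span ℝ {u : T3 | ∃ (p q r t : RR3) (a b c d : ℕ),
    p.IsHomogeneous a ∧ q.IsHomogeneous b ∧ r.IsHomogeneous c ∧ t.IsHomogeneous d ∧
    u = p ⊗ₜ (q ⊗ₜ (r ⊗ₜ t)) ∧ 2 * (a : ℤ) + 2 * b + 2 * c + 2 * d - 3 = n}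

/-- The degree-`n` component of `B_{srs} = R ⊗_{R^{s,r}} R (3)`. -/
noncomputable def BsrsDeg (n : ℤ) : Submodule ℝ Bsrs :=
  Submodule.span ℝ {u : Bsrs | ∃ (p q : RR3) (a b : ℕ),
    p.IsHomogeneous a ∧ q.IsHomogeneous b ∧ u = p ⊗ₜ q ∧ 2 * (a : ℤ) + 2 * b - 3 = n}

/-- The degree-`n` component of `Bₛ = R ⊗_{Rˢ} R (1)`. -/
noncomputable def BsDeg (n : ℤ) : Submodule ℝ Bs :=
  Submodule.span ℝ {u : Bs | ∃ (p q : RR3) (a b : ℕ),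
    p.IsHomogeneous a ∧ q.IsHomogeneous b ∧ u = p ⊗ₜ q ∧ 2 * (a : ℤ) + 2 * b - 1 = n}

/-! ### Invariants of the simple reflections and coordinates on `Bₛ` and `B_{srs}` -/

theorem X_sub_X_ne {i j : Fin 3} (h : i ≠ j) : (X i - X j : RR3) ≠ 0 :=
  sub_ne_zero.2 fun e => h (X_injective e)

theorem sAct_X (i : Fin 3) : sAct (X i) = X (Equiv.swap 0 1 i) := by simp [sAct]

theorem rAct_X (i : Fin 3) : rAct (X i) = X (Equiv.swap 1 2 i) := by simp [rAct]

theorem sAct_X0 : sAct (X 0) = X 1 := by rw [sAct_X]; rfl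
theorem sAct_X1 : sAct (X 1) = X 0 := by rw [sAct_X]; rfl
theorem sAct_X2 : sAct (X 2) = X 2 := by rw [sAct_X]; rfl
theorem rAct_X0 : rAct (X 0) = X 0 := by rw [rAct_X]; rfl
theorem rAct_X1 : rAct (X 1) = X 2 := by rw [rAct_X]; rfl
theorem rAct_X2 : rAct (X 2) = X 1 := by rw [rAct_X]; rfl

theorem mem_Rs {p : RR3} : p ∈ Rs ↔ sAct p = p := Iff.rfl

theorem mem_Rr {p : RR3} : p ∈ Rr ↔ rAct p = p := Iff.rfl

theorem mem_RW {p : RR3} : p ∈ RW ↔ sAct p = p ∧ rAct p = p := Iff.rfl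

theorem C_mem_Rs (c : ℝ) : (C c : RR3) ∈ Rs := Rs.algebraMap_mem c
theorem C_mem_Rr (c : ℝ) : (C c : RR3) ∈ Rr := Rr.algebraMap_mem c

theorem add_mem_Rs : (X 0 + X 1 : RR3) ∈ Rs := by
  rw [mem_Rs, map_add, sAct_X0, sAct_X1]; ring

theorem mul_mem_Rs : (X 0 * X 1 : RR3) ∈ Rs := by
  rw [mem_Rs, map_mul, sAct_X0, sAct_X1]; ring

theorem X2_mem_Rs : (X 2 : RR3) ∈ Rs := by rw [mem_Rs, sAct_X2]

theorem add_mem_Rr : (X 1 + X 2 : RR3) ∈ Rr := by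
  rw [mem_Rr, map_add, rAct_X1, rAct_X2]; ring

theorem mul_mem_Rr : (X 1 * X 2 : RR3) ∈ Rr := by
  rw [mem_Rr, map_mul, rAct_X1, rAct_X2]; ring

theorem X0_mem_Rr : (X 0 : RR3) ∈ Rr := by rw [mem_Rr, rAct_X0]

/-- `R` is generated by `1, y` as an `Rˢ`-module. -/
theorem exists_Rs_coeffs (q : RR3) :
    ∃ c d : Rs, q = c.1 + d.1 * X 1 := by
  induction q using MvPolynomial.induction_on with
  | C a => exact ⟨⟨C a, C_mem_Rs a⟩, 0, by simp⟩
  | add p q hp hq =>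
    obtain ⟨c, d, rfl⟩ := hp
    obtain ⟨c', d', rfl⟩ := hq
    exact ⟨c + c', d + d', by push_cast; ring⟩
  | mul_X p i hp =>
    obtain ⟨c, d, rfl⟩ := hp
    let s : Rs := ⟨_, add_mem_Rs⟩
    let m : Rs := ⟨_, mul_mem_Rs⟩
    let t : Rs := ⟨_, X2_mem_Rs⟩
    fin_cases i
    · exact ⟨c * s + d * m, -c, by simp [s, m]; ring⟩
    · exact ⟨-d * m, c + d * s, by simp [s, m]; ring⟩
    · exact ⟨c * t, d * t, by simp [t]; ring⟩

/-- `R` is generated by `zⁱyʲ` (`i ≤ 2`, `j ≤ 1`) as a module over the symmetric polynomials. -/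
theorem exists_RW_coeffs (q : RR3) :
    ∃ c₀ c₁ c₂ d₀ d₁ d₂ : RW, q = c₀.1 + c₁.1 * X 2 + c₂.1 * X 2 ^ 2
      + (d₀.1 + d₁.1 * X 2 + d₂.1 * X 2 ^ 2) * X 1 := by
  let e₁ : RW := ⟨X 0 + X 1 + X 2, by
    rw [mem_RW]; simp only [map_add, sAct_X0, sAct_X1, sAct_X2, rAct_X0, rAct_X1, rAct_X2]
    constructor <;> ring⟩
  let e₂ : RW := ⟨X 0 * X 1 + X 0 * X 2 + X 1 * X 2, by
    rw [mem_RW]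
    simp only [map_add, map_mul, sAct_X0, sAct_X1, sAct_X2, rAct_X0, rAct_X1, rAct_X2]
    constructor <;> ring⟩
  let e₃ : RW := ⟨X 0 * X 1 * X 2, by
    rw [mem_RW]
    simp only [map_mul, sAct_X0, sAct_X1, sAct_X2, rAct_X0, rAct_X1, rAct_X2]
    constructor <;> ring⟩
  have he₁ : e₁.1 = X 0 + X 1 + X 2 := rfl
  have he₂ : e₂.1 = X 0 * X 1 + X 0 * X 2 + X 1 * X 2 := rfl
  have he₃ : e₃.1 = X 0 * X 1 * X 2 := rfl
  let P : RR3 → Prop := fun q => ∃ c₀ c₁ c₂ d₀ d₁ d₂ : RW,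
    q = c₀.1 + c₁.1 * X 2 + c₂.1 * X 2 ^ 2 + (d₀.1 + d₁.1 * X 2 + d₂.1 * X 2 ^ 2) * X 1
  have hadd : ∀ p q, P p → P q → P (p + q) := by
    rintro _ _ ⟨c₀, c₁, c₂, d₀, d₁, d₂, rfl⟩ ⟨c₀', c₁', c₂', d₀', d₁', d₂', rfl⟩
    exact ⟨c₀ + c₀', c₁ + c₁', c₂ + c₂', d₀ + d₀', d₁ + d₁', d₂ + d₂', by push_cast; ring⟩
  have hmul : ∀ (c : RW) p, P p → P (c.1 * p) := by
    rintro c _ ⟨c₀, c₁, c₂, d₀, d₁, d₂, rfl⟩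
    exact ⟨c * c₀, c * c₁, c * c₂, c * d₀, c * d₁, c * d₂, by push_cast; ring⟩
  have hz : ∀ p, P p → P (p * X 2) := by
    rintro _ ⟨c₀, c₁, c₂, d₀, d₁, d₂, rfl⟩
    -- `z³ = e₁z² - e₂z + e₃`
    exact ⟨e₃ * c₂, c₀ - e₂ * c₂, c₁ + e₁ * c₂, e₃ * d₂, d₀ - e₂ * d₂, d₁ + e₁ * d₂, by
      push_cast; rw [he₁, he₂, he₃]; ring⟩
  have hy : ∀ p, P p → P (p * X 1) := by
    rintro _ ⟨c₀, c₁, c₂, d₀, d₁, d₂, rfl⟩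
    -- `y² = (e₁ - z)y - (e₂ - e₁z + z²)`
    have hD : P (d₀.1 + d₁.1 * X 2 + d₂.1 * X 2 ^ 2) := ⟨d₀, d₁, d₂, 0, 0, 0, by simp⟩
    have hDy : P ((d₀.1 + d₁.1 * X 2 + d₂.1 * X 2 ^ 2) * X 1) := ⟨0, 0, 0, d₀, d₁, d₂, by simp⟩
    have hCy : P ((c₀.1 + c₁.1 * X 2 + c₂.1 * X 2 ^ 2) * X 1) := ⟨0, 0, 0, c₀, c₁, c₂, by simp⟩
    have := hadd _ _ (hadd _ _ (hadd _ _ hCy (hmul e₁ _ hDy)) (hmul (-1) _ (hz _ hDy)))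
      (hadd _ _ (hadd _ _ (hmul (-e₂) _ hD) (hmul e₁ _ (hz _ hD))) (hmul (-1) _ (hz _ (hz _ hD))))
    convert this using 1
    push_cast
    rw [he₁, he₂]
    ring
  change P q
  induction q using MvPolynomial.induction_on with
  | C a => exact ⟨⟨C a, RW.algebraMap_mem a⟩, 0, 0, 0, 0, 0, by simp⟩
  | add p q hp hq => exact hadd _ _ hp hq
  | mul_X p i hp =>
    fin_cases i
    · have := hadd _ _ (hmul e₁ _ hp) (hadd _ _ (hmul (-1) _ (hy _ hp)) (hmul (-1) _ (hz _ hp)))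
      convert this using 1
      push_cast
      rw [he₁]
      ring!
    · exact hy _ hp
    · exact hz _ hp

theorem exists_Bs_coeffs (b : Bs) : ∃ p₀ p₁ : RR3, b = p₀ ⊗ₜ 1 + p₁ ⊗ₜ X 1 := by
  induction b using TensorProduct.induction_on with
  | zero => exact ⟨0, 0, by simp⟩
  | add a b ha hb =>
    obtain ⟨p₀, p₁, rfl⟩ := ha
    obtain ⟨q₀, q₁, rfl⟩ := hb
    exact ⟨p₀ + q₀, p₁ + q₁, by simp only [add_tmul]; abel⟩
  | tmul p q =>
    obtain ⟨c, d, rfl⟩ := exists_Rs_coeffs q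
    have h : (c.1 + d.1 * X 1 : RR3) = c • (1 : RR3) + d • X 1 := by
      have hs : ∀ (c : Rs) (u : RR3), c • u = c.1 * u := fun _ _ => rfl
      rw [hs, hs, mul_one]
    exact ⟨c • p, d • p, by rw [h, tmul_add, tmul_smul, tmul_smul, smul_tmul', smul_tmul']⟩

theorem exists_Bsrs_coeffs (a : Bsrs) : ∃ p₀ p₁ p₂ q₀ q₁ q₂ : RR3,
    a = p₀ ⊗ₜ 1 + p₁ ⊗ₜ X 2 + p₂ ⊗ₜ (X 2 ^ 2)
      + (q₀ ⊗ₜ X 1 + q₁ ⊗ₜ (X 2 * X 1) + q₂ ⊗ₜ (X 2 ^ 2 * X 1)) := by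
  induction a using TensorProduct.induction_on with
  | zero => exact ⟨0, 0, 0, 0, 0, 0, by simp⟩
  | add a b ha hb =>
    obtain ⟨p₀, p₁, p₂, p₃, p₄, p₅, rfl⟩ := ha
    obtain ⟨q₀, q₁, q₂, q₃, q₄, q₅, rfl⟩ := hb
    exact ⟨p₀ + q₀, p₁ + q₁, p₂ + q₂, p₃ + q₃, p₄ + q₄, p₅ + q₅, by
      simp only [add_tmul]; abel⟩
  | tmul p q =>
    obtain ⟨c₀, c₁, c₂, d₀, d₁, d₂, rfl⟩ := exists_RW_coeffs q
    have h : (c₀.1 + c₁.1 * X 2 + c₂.1 * X 2 ^ 2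
        + (d₀.1 + d₁.1 * X 2 + d₂.1 * X 2 ^ 2) * X 1 : RR3)
        = c₀ • (1 : RR3) + c₁ • X 2 + c₂ • X 2 ^ 2
          + (d₀ • X 1 + d₁ • (X 2 * X 1) + d₂ • (X 2 ^ 2 * X 1)) := by
      have hs : ∀ (c : RW) (u : RR3), c • u = c.1 * u := fun _ _ => rfl
      simp only [hs]
      ring
    exact ⟨c₀ • p, c₁ • p, c₂ • p, d₀ • p, d₁ • p, d₂ • p, by
      rw [h]; simp only [tmul_add, tmul_smul, smul_tmul']⟩

theorem vandermonde₃ {x y z a b c : RR3} (hxy : x - y ≠ 0) (hxz : x - z ≠ 0) (hyz : y - z ≠ 0)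
    (hx : a + b * x + c * x ^ 2 = 0) (hy : a + b * y + c * y ^ 2 = 0)
    (hz : a + b * z + c * z ^ 2 = 0) : a = 0 ∧ b = 0 ∧ c = 0 := by
  have h₁ : b + c * (x + y) = 0 :=
    (mul_eq_zero.1 (show (x - y) * (b + c * (x + y)) = 0 by linear_combination hx - hy)
      ).resolve_left hxy
  have h₂ : b + c * (x + z) = 0 :=
    (mul_eq_zero.1 (show (x - z) * (b + c * (x + z)) = 0 by linear_combination hx - hz)
      ).resolve_left hxz
  have hc : c = 0 :=
    (mul_eq_zero.1 (show (y - z) * c = 0 by linear_combination h₁ - h₂)).resolve_left hyz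
  subst hc
  have hb : b = 0 := by linear_combination h₁
  subst hb
  exact ⟨by linear_combination hx, rfl, rfl⟩

/-- The six polynomials are the coordinates of `exists_Bsrs_coeffs` of an element of `B_{srs}`, and
the hypothesis says that all maps `p ⊗ q ↦ p * w q`, `w ∈ S₃`, kill it, where `X i = w z` and
`X j = w y`. For fixed `w z`, the two possible values of `w y` separate the `p`'s from the `q`'s;
a Vandermonde argument in `w z` then applies to each. -/
theorem Bsrs_coeffs_eq_zero {p₀ p₁ p₂ q₀ q₁ q₂ : RR3}
    (h : ∀ i j : Fin 3, i ≠ j → p₀ + p₁ * X i + p₂ * X i ^ 2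
      + (q₀ * X j + q₁ * (X i * X j) + q₂ * (X i ^ 2 * X j)) = 0) :
    (p₀ = 0 ∧ p₁ = 0 ∧ p₂ = 0) ∧ (q₀ = 0 ∧ q₁ = 0 ∧ q₂ = 0) := by
  have h01 : (X 0 - X 1 : RR3) ≠ 0 := X_sub_X_ne (by decide)
  have h02 : (X 0 - X 2 : RR3) ≠ 0 := X_sub_X_ne (by decide)
  have h12 : (X 1 - X 2 : RR3) ≠ 0 := X_sub_X_ne (by decide)
  have key : ∀ i j k : Fin 3, i ≠ j → i ≠ k → j ≠ k →
      q₀ + q₁ * X i + q₂ * X i ^ 2 = 0 ∧ p₀ + p₁ * X i + p₂ * X i ^ 2 = 0 := by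
    intro i j k hij hik hjk
    have hq : q₀ + q₁ * X i + q₂ * X i ^ 2 = 0 :=
      (mul_eq_zero.1 (show (X j - X k) * (q₀ + q₁ * X i + q₂ * X i ^ 2) = 0 by
        linear_combination h i j hij - h i k hik)).resolve_left (X_sub_X_ne hjk)
    exact ⟨hq, by linear_combination h i j hij - X j * hq⟩
  have k0 := key 0 1 2 (by decide) (by decide) (by decide)
  have k1 := key 1 0 2 (by decide) (by decide) (by decide)
  have k2 := key 2 0 1 (by decide) (by decide) (by decide)
  exact ⟨vandermonde₃ h01 h02 h12 k0.2 k1.2 k2.2, vandermonde₃ h01 h02 h12 k0.1 k1.1 k2.1⟩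

/-! ### Evaluations of `Bₛ B_r Bₛ` in `R` -/

/-- The ring homomorphisms `T3 → R`, `p ⊗ q ⊗ h ⊗ t ↦ p * w₁ (q * w₂ (h * w₃ t))`, where
`w₁, w₃` fix `Rˢ` and `w₂` fixes `Rʳ`. -/
theorem exists_eval (w₁ w₂ w₃ : RR3 →ₐ[ℝ] RR3) (h₁ : ∀ c ∈ Rs, w₁ c = c)
    (h₂ : ∀ c ∈ Rr, w₂ c = c) (h₃ : ∀ c ∈ Rs, w₃ c = c) :
    ∃ E : T3 →+* RR3, ∀ p q h t : RR3,
      E (p ⊗ₜ (q ⊗ₜ (h ⊗ₜ t))) = p * w₁ (q * w₂ (h * w₃ t)) := by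
  let v₃ : RR3 →ₐ[Rs] RR3 := { w₃.toRingHom with commutes' := fun c => h₃ c.1 c.2 }
  let F₁ : T1 →ₐ[Rs] RR3 := Algebra.TensorProduct.productMap (AlgHom.id Rs RR3) v₃
  have hF₁ : ∀ h t : RR3, F₁ (h ⊗ₜ t) = h * w₃ t := fun h t =>
    Algebra.TensorProduct.productMap_apply_tmul _ _ _ _
  let v₂ : T1 →ₐ[Rr] RR3 := { w₂.toRingHom.comp F₁.toRingHom with
    commutes' := fun c => by
      change w₂ (F₁ (c.1 ⊗ₜ 1)) = c.1
      rw [hF₁, map_one, mul_one]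
      exact h₂ c.1 c.2 }
  let F₂ : T2 →ₐ[Rr] RR3 := Algebra.TensorProduct.productMap (AlgHom.id Rr RR3) v₂
  have hF₂ : ∀ q h t : RR3, F₂ (q ⊗ₜ (h ⊗ₜ t)) = q * w₂ (h * w₃ t) := fun q h t => by
    rw [← hF₁]
    exact Algebra.TensorProduct.productMap_apply_tmul _ _ _ _
  let v₁ : T2 →ₐ[Rs] RR3 := { w₁.toRingHom.comp F₂.toRingHom with
    commutes' := fun c => by
      change w₁ (F₂ (c.1 ⊗ₜ (1 ⊗ₜ 1))) = c.1
      rw [hF₂, map_one, mul_one, map_one, mul_one]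
      exact h₁ c.1 c.2 }
  let F₃ : T3 →ₐ[Rs] RR3 := Algebra.TensorProduct.productMap (AlgHom.id Rs RR3) v₁
  refine ⟨F₃.toRingHom, fun p q h t => ?_⟩
  rw [← hF₂]
  exact Algebra.TensorProduct.productMap_apply_tmul _ _ _ _

/-! ### The subbimodule generated by `1` and `G` -/

/-- Four copies of `R` in a commutative `ℝ`-algebra `T` which agree in turn on `Rˢ`, `Rʳ`, `Rˢ`,
as the four tensor factors of `R ⊗_{Rˢ} R ⊗_{Rʳ} R ⊗_{Rˢ} R` do. -/
structure Chain (T : Type) [CommRing T] [Algebra ℝ T] where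
  /-- the first factor -/
  i₀ : RR3 →+* T
  /-- the second factor -/
  i₁ : RR3 →+* T
  /-- the third factor -/
  i₂ : RR3 →+* T
  /-- the fourth factor -/
  i₃ : RR3 →+* T
  hC : ∀ c : ℝ, i₀ (C c) = algebraMap ℝ T c
  h₀₁ : ∀ c ∈ Rs, i₀ c = i₁ c
  h₁₂ : ∀ c ∈ Rr, i₁ c = i₂ c
  h₂₃ : ∀ c ∈ Rs, i₂ c = i₃ c

namespace Chain

variable {T : Type} [CommRing T] [Algebra ℝ T] (K : Chain T)

theorem hC₁ (c : ℝ) : K.i₁ (C c) = algebraMap ℝ T c := by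
  rw [← K.h₀₁ _ (C_mem_Rs c), K.hC]

theorem hC₂ (c : ℝ) : K.i₂ (C c) = algebraMap ℝ T c := by
  rw [← K.h₁₂ _ (C_mem_Rr c), K.hC₁]

theorem hC₃ (c : ℝ) : K.i₃ (C c) = algebraMap ℝ T c := by
  rw [← K.h₂₃ _ (C_mem_Rs c), K.hC₂]

/-- The element `1 ⊗ (α_r ⊗ 1 + 1 ⊗ α_r) ⊗ 1`, `α_r = z - y`: the image of `1 ⊗ 1` under
`m_r^a ∘ j_s^a`. -/
noncomputable def G : T := K.i₁ (X 2 - X 1) + K.i₂ (X 2 - X 1)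

theorem sum₀₁ : K.i₀ (X 0) + K.i₀ (X 1) = K.i₁ (X 0) + K.i₁ (X 1) := by
  simpa only [map_add] using K.h₀₁ _ add_mem_Rs

theorem prod₀₁ : K.i₀ (X 0) * K.i₀ (X 1) = K.i₁ (X 0) * K.i₁ (X 1) := by
  simpa only [map_mul] using K.h₀₁ _ mul_mem_Rs

theorem sum₁₂ : K.i₁ (X 1) + K.i₁ (X 2) = K.i₂ (X 1) + K.i₂ (X 2) := by
  simpa only [map_add] using K.h₁₂ _ add_mem_Rr

theorem prod₁₂ : K.i₁ (X 1) * K.i₁ (X 2) = K.i₂ (X 1) * K.i₂ (X 2) := by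
  simpa only [map_mul] using K.h₁₂ _ mul_mem_Rr

theorem sum₂₃ : K.i₂ (X 0) + K.i₂ (X 1) = K.i₃ (X 0) + K.i₃ (X 1) := by
  simpa only [map_add] using K.h₂₃ _ add_mem_Rs

/-- `G` intertwines the two middle factors: it spans the copy of `R` in `R ⊗_{Rʳ} R`. -/
theorem i₁_mul_G (c : RR3) : K.i₁ c * K.G = K.i₂ c * K.G := by
  have hy : K.i₁ (X 1) * K.G = K.i₂ (X 1) * K.G := by
    simp only [G, map_sub]
    linear_combination
      2 * K.prod₁₂ - (K.i₁ (X 1) + K.i₂ (X 1)) * K.sum₁₂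
  have hz : K.i₁ (X 2) * K.G = K.i₂ (X 2) * K.G := by
    linear_combination K.G * K.sum₁₂ - hy
  have hx : K.i₁ (X 0) * K.G = K.i₂ (X 0) * K.G := by rw [K.h₁₂ _ X0_mem_Rr]
  induction c using MvPolynomial.induction_on with
  | C a => rw [hC₁, hC₂]
  | add p q hp hq => rw [map_add, map_add, add_mul, add_mul, hp, hq]
  | mul_X p i hp =>
    have hi : K.i₁ (X i) * K.G = K.i₂ (X i) * K.G := by
      fin_cases i
      exacts [hx, hy, hz]
    rw [map_mul, map_mul]
    linear_combination K.i₁ (X i) * hp + K.i₂ p * hi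

theorem i₀_mul_G {c : RR3} (hc : c ∈ Rs) : K.i₀ c * K.G = K.i₃ c * K.G := by
  rw [K.h₀₁ _ hc, i₁_mul_G, K.h₂₃ _ hc]

/-- The part of degree `n` of the subbimodule generated by `1` (in degree `-3`) and `G`
(in degree `-1`). -/
noncomputable def img (n : ℤ) : Submodule ℝ T :=
  Submodule.span ℝ ({u | ∃ (p q : RR3) (a b : ℕ), p.IsHomogeneous a ∧ q.IsHomogeneous b ∧
      u = K.i₀ p * K.i₃ q ∧ 2 * (a : ℤ) + 2 * b - 3 = n} ∪
    {u | ∃ (p q : RR3) (a b : ℕ), p.IsHomogeneous a ∧ q.IsHomogeneous b ∧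
      u = K.i₀ p * K.i₃ q * K.G ∧ 2 * (a : ℤ) + 2 * b - 1 = n})

variable {K}

/-- It suffices to check on the generators of `K.img n` that multiplication by `t` maps it into
`K.img m`. -/
theorem mul_mem_img_of_gen {t : T} {n m : ℤ}
    (h : ∀ (p q : RR3) (a b : ℕ), p.IsHomogeneous a → q.IsHomogeneous b →
      (2 * (a : ℤ) + 2 * b - 3 = n → t * (K.i₀ p * K.i₃ q) ∈ K.img m) ∧
      (2 * (a : ℤ) + 2 * b - 1 = n → t * (K.i₀ p * K.i₃ q * K.G) ∈ K.img m))
    {u : T} (hu : u ∈ K.img n) : t * u ∈ K.img m := by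
  induction hu using Submodule.span_induction with
  | mem u hu =>
    rcases hu with ⟨p, q, a, b, hp, hq, rfl, hn⟩ | ⟨p, q, a, b, hp, hq, rfl, hn⟩
    · exact (h p q a b hp hq).1 hn
    · exact (h p q a b hp hq).2 hn
  | zero => simp
  | add u v _ _ hu hv => rw [mul_add]; exact add_mem hu hv
  | smul c u _ hu => rw [mul_smul_comm]; exact Submodule.smul_mem _ _ hu

theorem gen_mem {p q : RR3} {a b : ℕ} (hp : p.IsHomogeneous a) (hq : q.IsHomogeneous b) {n : ℤ}
    (hn : 2 * (a : ℤ) + 2 * b - 3 = n) : K.i₀ p * K.i₃ q ∈ K.img n :=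
  Submodule.subset_span (Or.inl ⟨p, q, a, b, hp, hq, rfl, hn⟩)

theorem genG_mem {p q : RR3} {a b : ℕ} (hp : p.IsHomogeneous a) (hq : q.IsHomogeneous b) {n : ℤ}
    (hn : 2 * (a : ℤ) + 2 * b - 1 = n) : K.i₀ p * K.i₃ q * K.G ∈ K.img n :=
  Submodule.subset_span (Or.inr ⟨p, q, a, b, hp, hq, rfl, hn⟩)

theorem i₀_mul_mem {p : RR3} {a : ℕ} (hp : p.IsHomogeneous a) {n : ℤ} {u : T}
    (hu : u ∈ K.img n) : K.i₀ p * u ∈ K.img (n + 2 * a) := by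
  refine mul_mem_img_of_gen (fun p' q a' b hp' hq => ⟨fun hn => ?_, fun hn => ?_⟩) hu
  · rw [← mul_assoc, ← map_mul]
    exact gen_mem (hp.mul hp') hq (by push_cast; linarith)
  · rw [← mul_assoc, ← mul_assoc, ← map_mul]
    exact genG_mem (hp.mul hp') hq (by push_cast; linarith)

theorem i₃_mul_mem {p : RR3} {a : ℕ} (hp : p.IsHomogeneous a) {n : ℤ} {u : T}
    (hu : u ∈ K.img n) : K.i₃ p * u ∈ K.img (n + 2 * a) := by
  refine mul_mem_img_of_gen (fun p' q a' b hp' hq => ⟨fun hn => ?_, fun hn => ?_⟩) hu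
  · rw [mul_left_comm, ← map_mul]
    exact gen_mem hp' (hp.mul hq) (by push_cast; linarith)
  · rw [← mul_assoc, mul_left_comm, ← map_mul]
    exact genG_mem hp' (hp.mul hq) (by push_cast; linarith)

theorem i₀_X_mul_mem (j : Fin 3) {n : ℤ} {u : T} (hu : u ∈ K.img n) :
    K.i₀ (X j) * u ∈ K.img (n + 2) := by
  simpa using i₀_mul_mem (isHomogeneous_X ℝ j) hu

theorem i₃_X_mul_mem (j : Fin 3) {n : ℤ} {u : T} (hu : u ∈ K.img n) :
    K.i₃ (X j) * u ∈ K.img (n + 2) := by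
  simpa using i₃_mul_mem (isHomogeneous_X ℝ j) hu

variable (K) in
/-- The linear form in the outer variables with `G = γ - 2y₁`, where `y₁` is the variable `y`
of the second factor. -/
noncomputable def γ : T :=
  K.i₀ (X 2) + K.i₃ (X 2) + K.i₀ (X 0) + K.i₀ (X 1) - K.i₃ (X 0) - K.i₃ (X 1)

theorem two_mul_y₁ : 2 * K.i₁ (X 1) = K.γ - K.G := by
  have h₀ : K.i₀ (X 2) = K.i₁ (X 2) := K.h₀₁ _ X2_mem_Rs
  have h₁ : K.i₁ (X 0) = K.i₂ (X 0) := K.h₁₂ _ X0_mem_Rr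
  have h₂ : K.i₂ (X 2) = K.i₃ (X 2) := K.h₂₃ _ X2_mem_Rs
  simp only [γ, G, map_sub]
  linear_combination -h₀ + h₂ - K.sum₀₁ - K.sum₂₃ - h₁

theorem γ_mul_mem {n : ℤ} {u : T} (hu : u ∈ K.img n) : K.γ * u ∈ K.img (n + 2) := by
  simp only [γ, add_mul, sub_mul]
  exact sub_mem (sub_mem (add_mem (add_mem (add_mem (i₀_X_mul_mem _ hu) (i₃_X_mul_mem _ hu))
    (i₀_X_mul_mem _ hu)) (i₀_X_mul_mem _ hu)) (i₃_X_mul_mem _ hu)) (i₃_X_mul_mem _ hu)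

/-- The quadratic equation of `y` over `Rˢ`, rewritten in terms of `G`. -/
theorem G_mul_G : K.G * K.G = -(K.γ * K.γ) + 2 * (K.γ * K.G)
    + 2 * ((K.i₀ (X 0) + K.i₀ (X 1)) * (K.γ - K.G)) - 4 * (K.i₀ (X 0) * K.i₀ (X 1)) := by
  have h := two_mul_y₁ (K := K)
  have hG : K.G = K.γ - 2 * K.i₁ (X 1) := by rw [h]; ring
  rw [hG]
  linear_combination -4 * K.i₁ (X 1) * K.sum₀₁ + 4 * K.prod₀₁

theorem ofNat_mul_mem (k : ℕ) {n : ℤ} {u : T} (hu : u ∈ K.img n) : (k : T) * u ∈ K.img n := by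
  rw [← nsmul_eq_mul]; exact nsmul_mem hu k

/-- By `G_mul_G`, multiplication by `G` preserves the subbimodule generated by `1` and `G`. -/
theorem G_mul_mem {n : ℤ} {u : T} (hu : u ∈ K.img n) : K.G * u ∈ K.img (n + 2) := by
  refine mul_mem_img_of_gen (fun p q a b hp hq => ⟨fun hn => ?_, fun hn => ?_⟩) hu
  · rw [mul_comm]; exact genG_mem hp hq (by linarith)
  · have hv : K.i₀ p * K.i₃ q ∈ K.img (n - 2) := gen_mem hp hq (by linarith)
    have hw : K.i₀ p * K.i₃ q * K.G ∈ K.img n := genG_mem hp hq (by linarith)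
    set v := K.i₀ p * K.i₃ q with hv'
    have e₁ : n - 2 + 2 + 2 = n + 2 := by ring
    have e₂ : n - 2 + 2 = n := by ring
    have m₁ := e₁ ▸ γ_mul_mem (γ_mul_mem hv)
    have m₂ := γ_mul_mem hw
    have m₃ := sub_mem (e₂ ▸ γ_mul_mem hv) hw
    have m₄ := add_mem (i₀_X_mul_mem 0 m₃) (i₀_X_mul_mem 1 m₃)
    have m₅ := e₁ ▸ i₀_X_mul_mem 0 (i₀_X_mul_mem 1 hv)
    have := sub_mem (add_mem (sub_mem (ofNat_mul_mem 2 m₂) m₁) (ofNat_mul_mem 2 m₄))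
      (ofNat_mul_mem 4 m₅)
    convert this using 1
    push_cast
    linear_combination v * G_mul_G (K := K)

/-- The variable `y` of the second factor is `(γ - G) / 2`; `x` and `z` follow from the
`Rˢ`-relations with the first factor. -/
theorem i₁_X_mul_mem (j : Fin 3) {n : ℤ} {u : T} (hu : u ∈ K.img n) :
    K.i₁ (X j) * u ∈ K.img (n + 2) := by
  have hy : K.i₁ (X 1) * u ∈ K.img (n + 2) := by
    have h := Submodule.smul_mem _ (2⁻¹ : ℝ) (sub_mem (γ_mul_mem hu) (G_mul_mem hu))
    have e : K.γ * u - K.G * u = (2 : ℝ) • (K.i₁ (X 1) * u) := by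
      rw [← sub_mul, ← two_mul_y₁, ofNat_smul_eq_nsmul ℝ, nsmul_eq_mul]
      push_cast; ring
    rwa [e, smul_smul, inv_mul_cancel₀ two_ne_zero, one_smul] at h
  fin_cases j
  · have := sub_mem (add_mem (i₀_X_mul_mem 0 hu) (i₀_X_mul_mem 1 hu)) hy
    convert this using 1
    simp only [Fin.zero_eta]
    linear_combination -u * K.sum₀₁
  · exact hy
  · have := i₀_X_mul_mem 2 hu
    rwa [K.h₀₁ _ X2_mem_Rs] at this

theorem i₂_X_mul_mem (j : Fin 3) {n : ℤ} {u : T} (hu : u ∈ K.img n) :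
    K.i₂ (X j) * u ∈ K.img (n + 2) := by
  have hx : K.i₂ (X 0) * u ∈ K.img (n + 2) := by
    have := i₁_X_mul_mem 0 hu
    rwa [K.h₁₂ _ X0_mem_Rr] at this
  fin_cases j
  · exact hx
  · have := sub_mem (add_mem (i₃_X_mul_mem 0 hu) (i₃_X_mul_mem 1 hu)) hx
    convert this using 1
    simp only [Fin.mk_one]
    linear_combination u * K.sum₂₃
  · have := i₃_X_mul_mem 2 hu
    rwa [← K.h₂₃ _ X2_mem_Rs] at this

/-- Closure under the variables of one factor (raising the degree by `2`) gives closure under all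
homogeneous polynomials in that factor. -/
theorem hom_mul_mem {i : RR3 →+* T} (hC : ∀ c, i (C c) = algebraMap ℝ T c)
    (hX : ∀ (j : Fin 3) (n : ℤ) (u : T), u ∈ K.img n → i (X j) * u ∈ K.img (n + 2))
    {p : RR3} {a : ℕ} (hp : p.IsHomogeneous a) {n : ℤ} {u : T} (hu : u ∈ K.img n) :
    i p * u ∈ K.img (n + 2 * a) := by
  have hpow : ∀ (j : Fin 3) (k : ℕ) (n : ℤ) (u : T), u ∈ K.img n →
      i (X j) ^ k * u ∈ K.img (n + 2 * k) := by
    intro j k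
    induction k with
    | zero => intro n u hu; simpa using hu
    | succ k ih =>
      intro n u hu
      have := hX j _ _ (ih n u hu)
      rw [← mul_assoc, ← pow_succ'] at this
      convert this using 2
      push_cast; ring
  rw [p.as_sum, map_sum, Finset.sum_mul]
  refine sum_mem fun d hd => ?_
  have hdeg : d 0 + d 1 + d 2 = a := by
    have := hp (mem_support_iff.1 hd)
    rw [Finsupp.weight_apply, Finsupp.sum_fintype _ _ (by simp), Fin.sum_univ_three] at this
    simpa using this
  rw [monomial_eq, Finsupp.prod_fintype _ _ (by simp), Fin.prod_univ_three]
  simp only [map_mul, map_pow, hC]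
  have := Submodule.smul_mem _ (coeff d p) (hpow 0 (d 0) _ _ (hpow 1 (d 1) _ _ (hpow 2 (d 2) _ _ hu)))
  convert this using 2
  · rw [← hdeg]; push_cast; ring
  · rw [Algebra.smul_def]; ring

/-- The subbimodule generated by `1` and `G` contains every product of elements of the four
factors, in the expected degree. -/
theorem mem_img {p q h t : RR3} {a b c d : ℕ} (hp : p.IsHomogeneous a) (hq : q.IsHomogeneous b)
    (hh : h.IsHomogeneous c) (ht : t.IsHomogeneous d) {n : ℤ}
    (hn : 2 * (a : ℤ) + 2 * b + 2 * c + 2 * d - 3 = n) :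
    K.i₀ p * K.i₁ q * K.i₂ h * K.i₃ t ∈ K.img n := by
  have h₀ : (1 : T) ∈ K.img (-3) := by
    simpa using gen_mem (K := K) (isHomogeneous_one (Fin 3) ℝ) (isHomogeneous_one (Fin 3) ℝ) rfl
  have := i₀_mul_mem hp (hom_mul_mem K.hC₁ (fun j _ _ h => i₁_X_mul_mem j h) hq
    (hom_mul_mem K.hC₂ (fun j _ _ h => i₂_X_mul_mem j h) hh (i₃_mul_mem ht h₀)))
  convert this using 1
  · rw [← hn]; congr 1; ring
  · ring

/-! ### The bimodule map `B_{srs} ⊕ Bₛ → Bₛ B_r Bₛ` -/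

variable (K)

/-- The bimodule map `B_{srs} → T` sending `1 ⊗ 1` to `1`. -/
noncomputable def φ : Bsrs →+ T :=
  TensorProduct.liftAddHom
    ((AddMonoidHom.mul.comp K.i₀.toAddMonoidHom).compl₂ K.i₃.toAddMonoidHom) fun c p q => by
      have hc : K.i₀ c.1 = K.i₃ c.1 := by rw [K.h₀₁ _ c.2.1, K.h₁₂ _ c.2.2, K.h₂₃ _ c.2.1]
      change K.i₀ (c.1 * p) * K.i₃ q = K.i₀ p * K.i₃ (c.1 * q)
      rw [map_mul, map_mul, hc]
      ring

theorem φ_tmul (p q : RR3) : K.φ (p ⊗ₜ q) = K.i₀ p * K.i₃ q := rfl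

/-- The bimodule map `Bₛ → T` sending `1 ⊗ 1` to `G`. -/
noncomputable def ψ : Bs →+ T :=
  TensorProduct.liftAddHom
    (((AddMonoidHom.mul.comp K.i₀.toAddMonoidHom).compl₂ K.i₃.toAddMonoidHom).compr₂
      (AddMonoidHom.mulRight K.G)) fun c p q => by
      change K.i₀ (c.1 * p) * K.i₃ q * K.G = K.i₀ p * K.i₃ (c.1 * q) * K.G
      rw [map_mul, map_mul]
      linear_combination K.i₀ p * K.i₃ q * K.i₀_mul_G c.2

theorem ψ_tmul (p q : RR3) : K.ψ (p ⊗ₜ q) = K.i₀ p * K.i₃ q * K.G := rfl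

theorem i₀_smul (c : ℝ) (p : RR3) : K.i₀ (c • p) = c • K.i₀ p := by
  rw [smul_eq_C_mul, map_mul, K.hC, Algebra.smul_def]

/-- The sum `B_{srs} ⊕ Bₛ → T` of `φ` and `ψ`. -/
noncomputable def g : Bsrs × Bs →ₗ[ℝ] T where
  toFun v := K.φ v.1 + K.ψ v.2
  map_add' v w := by simp only [Prod.fst_add, Prod.snd_add, map_add]; abel
  map_smul' c v := by
    obtain ⟨a, b⟩ := v
    have ha : K.φ (c • a) = c • K.φ a := by
      induction a using TensorProduct.induction_on with
      | zero => simp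
      | add a b ha hb => rw [smul_add, map_add, map_add, smul_add, ha, hb]
      | tmul p q => rw [smul_tmul', φ_tmul, φ_tmul, i₀_smul, smul_mul_assoc]
    have hb : K.ψ (c • b) = c • K.ψ b := by
      induction b using TensorProduct.induction_on with
      | zero => simp
      | add a b ha hb => rw [smul_add, map_add, map_add, smul_add, ha, hb]
      | tmul p q => rw [smul_tmul', ψ_tmul, ψ_tmul, i₀_smul, smul_mul_assoc, smul_mul_assoc]
    simp only [Prod.smul_mk, RingHom.id_apply, ha, hb, smul_add]

theorem g_apply (a : Bsrs) (b : Bs) : K.g (a, b) = K.φ a + K.ψ b := rfl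

theorem φ_mul (p q : RR3) (a : Bsrs) :
    K.φ ((p ⊗ₜ 1 : Bsrs) * a * (1 ⊗ₜ q)) = K.i₀ p * K.φ a * K.i₃ q := by
  induction a using TensorProduct.induction_on with
  | zero => simp
  | add a b ha hb => rw [mul_add, add_mul, map_add, map_add, ha, hb]; ring
  | tmul p' q' =>
    rw [Algebra.TensorProduct.tmul_mul_tmul, Algebra.TensorProduct.tmul_mul_tmul, φ_tmul, φ_tmul]
    simp only [one_mul, mul_one, map_mul]
    ring

theorem ψ_mul (p q : RR3) (b : Bs) :
    K.ψ ((p ⊗ₜ 1 : Bs) * b * (1 ⊗ₜ q)) = K.i₀ p * K.ψ b * K.i₃ q := by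
  induction b using TensorProduct.induction_on with
  | zero => simp
  | add a b ha hb => rw [mul_add, add_mul, map_add, map_add, ha, hb]; ring
  | tmul p' q' =>
    rw [Algebra.TensorProduct.tmul_mul_tmul, Algebra.TensorProduct.tmul_mul_tmul, ψ_tmul, ψ_tmul]
    simp only [one_mul, mul_one, map_mul]
    ring

/-- Since `1 ⊗ 1` has degree `-3` in `B_{srs}` and `-1` in `Bₛ`, homogeneous elements of the
subbimodule lift to homogeneous elements of the same degree. -/
theorem img_le (n : ℤ) : K.img n ≤ ((BsrsDeg n).prod (BsDeg n)).map K.g := by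
  refine Submodule.span_le.2 ?_
  rintro u (⟨p, q, a, b, hp, hq, rfl, hn⟩ | ⟨p, q, a, b, hp, hq, rfl, hn⟩)
  · refine ⟨(p ⊗ₜ q, 0), ⟨Submodule.subset_span ⟨p, q, a, b, hp, hq, rfl, hn⟩, zero_mem _⟩, ?_⟩
    rw [g_apply, map_zero, add_zero, φ_tmul]
  · refine ⟨(0, p ⊗ₜ q), ⟨zero_mem _, Submodule.subset_span ⟨p, q, a, b, hp, hq, rfl, hn⟩⟩, ?_⟩
    rw [g_apply, map_zero, zero_add, ψ_tmul]

end Chain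

theorem homogeneous_induction {P : RR3 → Prop} (zero : P 0) (add : ∀ p q, P p → P q → P (p + q))
    (hom : ∀ p a, p.IsHomogeneous a → P p) (p : RR3) : P p := by
  rw [← sum_homogeneousComponent p]
  exact Finset.sum_induction _ P add zero fun a _ => hom _ a (homogeneousComponent_isHomogeneous a p)

theorem Chain.mem_range {T : Type} [CommRing T] [Algebra ℝ T] (K : Chain T) (p q h t : RR3) :
    K.i₀ p * K.i₁ q * K.i₂ h * K.i₃ t ∈ LinearMap.range K.g := by
  induction p using homogeneous_induction with
  | zero => simp
  | add p p' hp hp' => simp only [map_add, add_mul]; exact add_mem hp hp'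
  | hom p a hp =>
  induction q using homogeneous_induction with
  | zero => simp
  | add p p' hp hp' => simp only [map_add, add_mul, mul_add]; exact add_mem hp hp'
  | hom q b hq =>
  induction h using homogeneous_induction with
  | zero => simp
  | add p p' hp hp' => simp only [map_add, add_mul, mul_add]; exact add_mem hp hp'
  | hom h c hh =>
  induction t using homogeneous_induction with
  | zero => simp
  | add p p' hp hp' => simp only [map_add, mul_add]; exact add_mem hp hp'
  | hom t d ht =>
  exact LinearMap.map_le_range (K.img_le _ (Chain.mem_img hp hq hh ht rfl))

/-! ### Bijectivity -/

/-- The four factors of `Bₛ B_r Bₛ`. -/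
noncomputable def chainT3 : Chain T3 where
  i₀ := Algebra.TensorProduct.includeLeftRingHom (R := Rs) (A := RR3) (B := T2)
  i₁ := (Algebra.TensorProduct.includeRight (R := Rs) (A := RR3) (B := T2)).toRingHom.comp
    (Algebra.TensorProduct.includeLeftRingHom (R := Rr) (A := RR3) (B := T1))
  i₂ := (Algebra.TensorProduct.includeRight (R := Rs) (A := RR3) (B := T2)).toRingHom.comp
    ((Algebra.TensorProduct.includeRight (R := Rr) (A := RR3) (B := T1)).toRingHom.comp
      (Algebra.TensorProduct.includeLeftRingHom (R := Rs) (A := RR3) (B := RR3)))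
  i₃ := (Algebra.TensorProduct.includeRight (R := Rs) (A := RR3) (B := T2)).toRingHom.comp
    ((Algebra.TensorProduct.includeRight (R := Rr) (A := RR3) (B := T1)).toRingHom.comp
      (Algebra.TensorProduct.includeRight (R := Rs) (A := RR3) (B := RR3)).toRingHom)
  hC c := rfl
  h₀₁ c hc := by
    let c' : Rs := ⟨c, hc⟩
    have h := (Algebra.TensorProduct.includeRight (R := Rs) (A := RR3) (B := T2)).commutes c'
    exact h.symm
  h₁₂ c hc := by
    let c' : Rr := ⟨c, hc⟩
    have h := (Algebra.TensorProduct.includeRight (R := Rr) (A := RR3) (B := T1)).commutes c'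
    exact congrArg (Algebra.TensorProduct.includeRight (R := Rs) (A := RR3) (B := T2)) h.symm
  h₂₃ c hc := by
    let c' : Rs := ⟨c, hc⟩
    have h := (Algebra.TensorProduct.includeRight (R := Rs) (A := RR3) (B := RR3)).commutes c'
    exact congrArg (fun u => Algebra.TensorProduct.includeRight (R := Rs) (A := RR3) (B := T2)
      (Algebra.TensorProduct.includeRight (R := Rr) (A := RR3) (B := T1) u)) h.symm

theorem chainT3_i₀ (p : RR3) : chainT3.i₀ p = p ⊗ₜ (1 ⊗ₜ (1 ⊗ₜ 1)) := rfl
theorem chainT3_i₁ (p : RR3) : chainT3.i₁ p = 1 ⊗ₜ (p ⊗ₜ (1 ⊗ₜ 1)) := rfl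
theorem chainT3_i₂ (p : RR3) : chainT3.i₂ p = 1 ⊗ₜ (1 ⊗ₜ (p ⊗ₜ 1)) := rfl
theorem chainT3_i₃ (p : RR3) : chainT3.i₃ p = 1 ⊗ₜ (1 ⊗ₜ (1 ⊗ₜ p)) := rfl

theorem tmul_eq_prod (p q h t : RR3) : (p ⊗ₜ (q ⊗ₜ (h ⊗ₜ t)) : T3) =
    chainT3.i₀ p * chainT3.i₁ q * chainT3.i₂ h * chainT3.i₃ t := by
  rw [chainT3_i₀, chainT3_i₁, chainT3_i₂, chainT3_i₃]
  simp only [Algebra.TensorProduct.tmul_mul_tmul, one_mul, mul_one]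

theorem g_surjective : Function.Surjective chainT3.g := by
  rw [← LinearMap.range_eq_top, eq_top_iff]
  rintro u -
  induction u using TensorProduct.induction_on with
  | zero => exact zero_mem _
  | add u v hu hv => exact add_mem hu hv
  | tmul p u =>
  induction u using TensorProduct.induction_on with
  | zero => rw [tmul_zero]; exact zero_mem _
  | add u v hu hv => rw [tmul_add]; exact add_mem hu hv
  | tmul q u =>
  induction u using TensorProduct.induction_on with
  | zero => rw [tmul_zero, tmul_zero]; exact zero_mem _
  | add u v hu hv => rw [tmul_add, tmul_add]; exact add_mem hu hv
  | tmul h t => rw [tmul_eq_prod]; exact chainT3.mem_range p q h t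

/-- The value on `g (a, b)` of the evaluation attached to `w₁, w₂, w₃`, for `a` and `b` in
coordinates. -/
theorem eval_g (w₁ w₂ w₃ : RR3 →ₐ[ℝ] RR3) (h₁ : ∀ c ∈ Rs, w₁ c = c)
    (h₂ : ∀ c ∈ Rr, w₂ c = c) (h₃ : ∀ c ∈ Rs, w₃ c = c) {p₀ p₁ p₂ q₀ q₁ q₂ r₀ r₁ : RR3}
    (h : chainT3.g (p₀ ⊗ₜ 1 + p₁ ⊗ₜ X 2 + p₂ ⊗ₜ (X 2 ^ 2)
      + (q₀ ⊗ₜ X 1 + q₁ ⊗ₜ (X 2 * X 1) + q₂ ⊗ₜ (X 2 ^ 2 * X 1)), r₀ ⊗ₜ 1 + r₁ ⊗ₜ X 1) = 0) :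
    p₀ + p₁ * w₁ (w₂ (w₃ (X 2))) + p₂ * w₁ (w₂ (w₃ (X 2))) ^ 2
      + (q₀ * w₁ (w₂ (w₃ (X 1))) + q₁ * (w₁ (w₂ (w₃ (X 2))) * w₁ (w₂ (w₃ (X 1))))
        + q₂ * (w₁ (w₂ (w₃ (X 2))) ^ 2 * w₁ (w₂ (w₃ (X 1)))))
      + (r₀ + r₁ * w₁ (w₂ (w₃ (X 1)))) * (w₁ (X 2 - X 1) + w₁ (w₂ (X 2 - X 1))) = 0 := by
  obtain ⟨E, hE⟩ := exists_eval w₁ w₂ w₃ h₁ h₂ h₃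
  have e₀ : ∀ p, E (chainT3.i₀ p) = p := fun p => by simp [chainT3_i₀, hE]
  have e₁ : ∀ p, E (chainT3.i₁ p) = w₁ p := fun p => by simp [chainT3_i₁, hE]
  have e₂ : ∀ p, E (chainT3.i₂ p) = w₁ (w₂ p) := fun p => by simp [chainT3_i₂, hE]
  have e₃ : ∀ p, E (chainT3.i₃ p) = w₁ (w₂ (w₃ p)) := fun p => by simp [chainT3_i₃, hE]
  have := congrArg E h
  rw [Chain.g_apply] at this
  simp only [map_add, map_zero, Chain.φ_tmul, Chain.ψ_tmul, Chain.G, map_mul, e₀, e₁, e₂, e₃,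
    map_one, map_pow, mul_one] at this
  linear_combination this

/-- The eight evaluations with `w₁, w₃ ∈ {1, s}` and `w₂ ∈ {1, r}` detect zero on the image of `g`:
those with `w₂ = r` kill `G`, and those with `w₂ = 1` send it to `2 w₁(α_r)`. -/
theorem g_injective : Function.Injective chainT3.g := by
  rw [injective_iff_map_eq_zero]
  rintro ⟨a, b⟩ h
  obtain ⟨p₀, p₁, p₂, q₀, q₁, q₂, rfl⟩ := exists_Bsrs_coeffs a
  obtain ⟨r₀, r₁, rfl⟩ := exists_Bs_coeffs b
  have hid : ∀ (S : Subalgebra ℝ RR3), ∀ c ∈ S, AlgHom.id ℝ RR3 c = c := fun _ _ _ => rfl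
  let s : RR3 →ₐ[ℝ] RR3 := sAct
  let r : RR3 →ₐ[ℝ] RR3 := rAct
  have hs : ∀ c ∈ Rs, s c = c := fun _ h => h
  have hr : ∀ c ∈ Rr, r c = c := fun _ h => h
  have s0 : s (X 0) = X 1 := sAct_X0
  have s1 : s (X 1) = X 0 := sAct_X1
  have s2 : s (X 2) = X 2 := sAct_X2
  have r0 : r (X 0) = X 0 := rAct_X0
  have r1 : r (X 1) = X 2 := rAct_X1
  have r2 : r (X 2) = X 1 := rAct_X2
  have k111 := eval_g (AlgHom.id ℝ _) (AlgHom.id ℝ _) (AlgHom.id ℝ _) (hid _) (hid _) (hid _) h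
  have k11s := eval_g (AlgHom.id ℝ _) (AlgHom.id ℝ _) s (hid _) (hid _) hs h
  have ks11 := eval_g s (AlgHom.id ℝ _) (AlgHom.id ℝ _) hs (hid _) (hid _) h
  have ks1s := eval_g s (AlgHom.id ℝ _) s hs (hid _) hs h
  have k1r1 := eval_g (AlgHom.id ℝ _) r (AlgHom.id ℝ _) (hid _) hr (hid _) h
  have k1rs := eval_g (AlgHom.id ℝ _) r s (hid _) hr hs h
  have ksr1 := eval_g s r (AlgHom.id ℝ _) hs hr (hid _) h
  have ksrs := eval_g s r s hs hr hs h
  simp only [AlgHom.id_apply, map_sub, s0, s1, s2,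
    r0, r1, r2] at k111 k11s ks11 ks1s k1r1 k1rs ksr1 ksrs
  have h01 : (2 * (X 0 - X 1) : RR3) ≠ 0 := mul_ne_zero two_ne_zero (X_sub_X_ne (by decide))
  -- The two evaluations with `w₂ = 1` and given `w = w₁ w₃` differ only in the value `2 w₁(α_r)`
  -- of `G`, so they separate `a` from `b`.
  have b1 : r₀ + r₁ * X 1 = 0 :=
    (mul_eq_zero.1 (show 2 * (X 0 - X 1) * (r₀ + r₁ * X 1) = 0 by
      linear_combination k111 - ks1s)).resolve_left h01
  have bs : r₀ + r₁ * X 0 = 0 :=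
    (mul_eq_zero.1 (show 2 * (X 0 - X 1) * (r₀ + r₁ * X 0) = 0 by
      linear_combination k11s - ks11)).resolve_left h01
  have hr₁ : r₁ = 0 := (mul_eq_zero.1 (show (X 0 - X 1) * r₁ = 0 by
      linear_combination bs - b1)).resolve_left (X_sub_X_ne (by decide))
  have hr₀ : r₀ = 0 := by rw [hr₁] at b1; linear_combination b1
  subst hr₁ hr₀
  simp only [zero_mul, add_zero] at k111 k11s k1r1 k1rs ksr1 ksrs
  have := Bsrs_coeffs_eq_zero (p₀ := p₀) (p₁ := p₁) (p₂ := p₂) (q₀ := q₀) (q₁ := q₁) (q₂ := q₂) (by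
    intro i j hij
    fin_cases i <;> fin_cases j
    exacts [absurd rfl hij, ksrs, ksr1, k1rs, absurd rfl hij, k1r1, k11s, k111, absurd rfl hij])
  obtain ⟨⟨rfl, rfl, rfl⟩, rfl, rfl, rfl⟩ := this
  simp

/-- With `R = ℝ[x,y,z]`, `s` swapping `x,y` and `r` swapping `y,z`,
there is an isomorphism of graded `R`-bimodules `Bₛ ⊗_R B_r ⊗_R Bₛ ≅ B_{srs} ⊕ Bₛ`:
an `ℝ`-linear equivalence commuting with the left and right multiplications by `R` and
preserving degrees. -/
theorem BsBrBs_iso_Bsrs_plus_Bs :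
    ∃ f : T3 ≃ₗ[ℝ] Bsrs × Bs,
      (∀ (p q : RR3) (u : T3),
        f (((p ⊗ₜ 1 : T3) * u) * (1 ⊗ₜ (1 ⊗ₜ (1 ⊗ₜ q)))) =
          ((p ⊗ₜ 1 : Bsrs) * (f u).1 * (1 ⊗ₜ q),
            (p ⊗ₜ 1 : Bs) * (f u).2 * (1 ⊗ₜ q))) ∧
      (∀ (n : ℤ) (u : T3), u ∈ T3Deg n →
        (f u).1 ∈ BsrsDeg n ∧ (f u).2 ∈ BsDeg n) := by
  let e : (Bsrs × Bs) ≃ₗ[ℝ] T3 := LinearEquiv.ofBijective chainT3.g ⟨g_injective, g_surjective⟩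
  have he : ∀ v, e v = chainT3.g v := fun _ => rfl
  refine ⟨e.symm, fun p q u => ?_, fun n u hu => ?_⟩
  · rw [LinearEquiv.symm_apply_eq, he, Chain.g_apply, Chain.φ_mul, Chain.ψ_mul]
    have hu : chainT3.φ (e.symm u).1 + chainT3.ψ (e.symm u).2 = u := e.apply_symm_apply u
    change chainT3.i₀ p * u * chainT3.i₃ q = _
    conv_lhs => rw [← hu]
    ring
  · have hle : T3Deg n ≤ chainT3.img n := by
      refine Submodule.span_le.2 ?_
      rintro _ ⟨p, q, h, t, a, b, c, d, hp, hq, hh, ht, rfl, hn⟩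
      rw [tmul_eq_prod]
      exact Chain.mem_img hp hq hh ht hn
    obtain ⟨v, hv, rfl⟩ := chainT3.img_le n (hle hu)
    rw [← he, e.symm_apply_apply]
    exact hv
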